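/- arXiv:2109.02709 — 3 statements merged into one kernel-verified Lean document; each statement's English description precedes it below -/
import Mathlib

section
/- For every s > 0, ∫₀^∞ cos(s x) · 2x / ((1+x²)·(e^{πx/2} + 1)) dx = (π/2)·e^{−s} + 2·sinh(s)·arctan(e^{−s}) + cosh(s)·log((1 − e^{−s})/(1 + e^{−s})) − (e^{−s}·Ei(s) − e^{s}·E₁(s))/2. Moreover, at s = 0, ∫₀^∞ 2x / ((1+x²)·(e^{πx/2} + 1)) dx = π/2 − γ − log 2. -/
open MeasureTheory Set

/-- The exponential integral `E₁(x) = ∫_x^∞ e^{−t}/t dt` for `x > 0`. -/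
noncomputable def expIntegralE1 (x : ℝ) : ℝ :=
  ∫ t in Ioi x, Real.exp (-t) / t

/-- The principal-value exponential integral
`Ei(x) = γ + log x + Σ_{k≥1} x^k/(k·k!)` for `x > 0`. -/
noncomputable def expIntegralEi (x : ℝ) : ℝ :=
  Real.eulerMascheroniConstant + Real.log x +
    ∑' k : ℕ, x ^ (k + 1) / ((k + 1) * (Nat.factorial (k + 1)))

/-!
The kernel `k(s, x) = ∫ t in Ioi s, e^{-t} sin(t x) dt` satisfies
`e^s k(s, x) + e^{-s} k(-s, x) = 2x cos(s x) / (1 + x²)`, so for any weight `w` the transform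
`T(s) = ∫ k(s, x) w(x) dx` gives `∫ 2x / (1 + x²) cos(s x) w(x) dx = e^s T(s) + e^{-s} T(-s)`,
while `T'(s) = -e^{-s} ∫ sin(s x) w(x) dx` and `T → 0` at `+∞`. For `w(x) = 1 / (e^{πx/2} + 1)` the
geometric series and the partial fractions of the cotangent give
`∫ sin(s x) w(x) dx = 1/(2s) - 1/sinh(2s)`, hence `2T(s)` and
`-Ei(-s) + log tanh(s/2) + 2 arctan(e^{-s})` have the same derivative for `s ≠ 0`. Their difference
extends continuously to `s = 0` and tends to `0` at `+∞`, so it vanishes; its value at `s = 0` then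
yields the constant `π/2 - γ - log 2`.
-/

open Filter Real Topology

section ConstantAcrossSingularity

variable {E : Type*} [NormedAddCommGroup E] [NormedSpace ℝ E]

lemma eq_of_hasDerivAt_zero_of_tendsto_nhdsNE {f : ℝ → E} {a : ℝ} {c : E}
    (hf : ∀ x ≠ a, HasDerivAt f 0 x) (hlim : Tendsto f (𝓝[≠] a) (𝓝 c)) {x : ℝ} (hx : x ≠ a) :
    f x = c := by
  have hcont : ContinuousAt (Function.update f a c) a := continuousAt_update_same.2 hlim
  have hoff : ∀ y ≠ a, HasDerivAt (Function.update f a c) 0 y := fun y hy =>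
    (hf y hy).congr_of_eventuallyEq <|
      (eventually_ne_nhds hy).mono fun z hz => Function.update_of_ne hz c f
  have hderiv := hasDerivAt_of_hasDerivAt_of_ne' (g := fun _ => 0) hoff hcont continuousAt_const
  simpa [hx] using is_const_of_deriv_eq_zero (fun y => (hderiv y).differentiableAt)
    (fun y => (hderiv y).deriv) x a

end ConstantAcrossSingularity

section ExpSinTail

/-- The tail `∫ t in Ioi s, exp (-t) * sin (t * x)` of the Laplace transform of the sine, in closed
form. It serves as an integral kernel in `x`. -/
noncomputable def expSinTail (s x : ℝ) : ℝ :=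
  exp (-s) * (x * cos (s * x) + sin (s * x)) / (1 + x ^ 2)

lemma hasDerivAt_expSinTail (s x : ℝ) :
    HasDerivAt (fun t => expSinTail t x) (-(exp (-s) * sin (s * x))) s := by
  have hlin : HasDerivAt (fun t : ℝ => t * x) x s := by simpa using (hasDerivAt_id s).mul_const x
  refine (((hasDerivAt_neg s).exp.mul ((hlin.cos.const_mul x).add hlin.sin)).div_const
    (1 + x ^ 2)).congr_deriv ?_
  have : 1 + x ^ 2 ≠ 0 := by positivity
  simp only [Pi.add_apply]
  field_simp
  ring

lemma abs_expSinTail_le (s x : ℝ) : |expSinTail s x| ≤ exp (-s) := by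
  have hpos : 0 < 1 + x ^ 2 := by positivity
  have hsq : (x * cos (s * x) + sin (s * x)) ^ 2 ≤ (1 + x ^ 2) ^ 2 := by
    nlinarith [sq_nonneg (x * sin (s * x) - cos (s * x)), sin_sq_add_cos_sq (s * x), sq_nonneg x]
  rw [expSinTail, abs_div, abs_mul, abs_of_pos (exp_pos _), abs_of_pos hpos, div_le_iff₀ hpos]
  gcongr
  exact abs_le_of_sq_le_sq hsq hpos.le

lemma continuous_expSinTail (s : ℝ) : Continuous (expSinTail s) :=
  Continuous.div (by fun_prop) (by fun_prop) fun x => by positivity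

lemma exp_mul_expSinTail_add (s x : ℝ) :
    exp s * expSinTail s x + exp (-s) * expSinTail (-s) x =
      2 * x / (1 + x ^ 2) * cos (s * x) := by
  simp only [expSinTail, neg_neg, neg_mul, cos_neg, sin_neg, exp_neg]
  field_simp
  ring

variable {μ : Measure ℝ} {w : ℝ → ℝ}

/-- The integral transform of the weight `w` with kernel `expSinTail`. -/
noncomputable def expSinTailTransform (μ : Measure ℝ) (w : ℝ → ℝ) (s : ℝ) : ℝ :=
  ∫ x, expSinTail s x * w x ∂μ

lemma integrable_expSinTail_mul (hw : Integrable w μ) (s : ℝ) :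
    Integrable (fun x => expSinTail s x * w x) μ :=
  hw.bdd_mul (continuous_expSinTail s).aestronglyMeasurable (ae_of_all _ (abs_expSinTail_le s))

lemma hasDerivAt_expSinTailTransform (hw : Integrable w μ) (s : ℝ) :
    HasDerivAt (expSinTailTransform μ w) (-(exp (-s) * ∫ x, sin (s * x) * w x ∂μ)) s := by
  rw [← integral_const_mul, ← integral_neg]
  refine (hasDerivAt_integral_of_dominated_loc_of_deriv_le (s := Ioi (s - 1))
    (F' := fun t x => -(exp (-t) * (sin (t * x) * w x))) (bound := fun x => exp (1 - s) * |w x|)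
    (Ioi_mem_nhds (by linarith))
    (Eventually.of_forall fun t => (integrable_expSinTail_mul hw t).aestronglyMeasurable)
    (integrable_expSinTail_mul hw s) ?_ ?_ (hw.abs.const_mul _) ?_).2
  · exact (((by fun_prop : Continuous fun x => sin (s * x)).aestronglyMeasurable.mul
      hw.aestronglyMeasurable).const_mul _).neg
  · refine ae_of_all _ fun x t (ht : s - 1 < t) => ?_
    rw [norm_neg, norm_mul, norm_mul, norm_eq_abs, norm_eq_abs, norm_eq_abs, abs_exp]
    gcongr
    · linarith
    · exact mul_le_of_le_one_left (abs_nonneg _) (abs_sin_le_one _)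
  · exact ae_of_all _ fun x t _ =>
      ((hasDerivAt_expSinTail t x).mul_const (w x)).congr_deriv (by ring)

lemma tendsto_expSinTailTransform_atTop (hw : Integrable w μ) :
    Tendsto (expSinTailTransform μ w) atTop (𝓝 0) := by
  have hbound (s : ℝ) : ‖expSinTailTransform μ w s‖ ≤ exp (-s) * ∫ x, |w x| ∂μ := by
    rw [← integral_const_mul]
    refine norm_integral_le_of_norm_le (hw.abs.const_mul _) (ae_of_all _ fun x => ?_)
    rw [norm_mul, norm_eq_abs, norm_eq_abs]
    gcongr
    exact abs_expSinTail_le s x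
  exact squeeze_zero_norm hbound (by simpa using tendsto_exp_neg_atTop_nhds_zero.mul_const _)

lemma integral_cos_mul_eq_expSinTailTransform (hw : Integrable w μ) (s : ℝ) :
    ∫ x, 2 * x / (1 + x ^ 2) * cos (s * x) * w x ∂μ =
      exp s * expSinTailTransform μ w s + exp (-s) * expSinTailTransform μ w (-s) := by
  simp only [expSinTailTransform, ← exp_mul_expSinTail_add, add_mul, mul_assoc]
  rw [integral_add ((integrable_expSinTail_mul hw s).const_mul _)
    ((integrable_expSinTail_mul hw (-s)).const_mul _), integral_const_mul, integral_const_mul]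

end ExpSinTail

section ExponentialIntegral

lemma tsum_pow_div_factorial_succ {x : ℝ} (hx : x ≠ 0) :
    ∑' k : ℕ, x ^ k / (Nat.factorial (k + 1)) = (exp x - 1) / x := by
  have hexp : exp x = 1 + ∑' k : ℕ, x ^ (k + 1) / (Nat.factorial (k + 1)) := by
    rw [exp_eq_exp_ℝ, NormedSpace.exp_eq_tsum_div]
    simpa using (summable_pow_div_factorial x).tsum_eq_zero_add
  rw [hexp, add_sub_cancel_left, ← tsum_div_const]
  exact tsum_congr fun k => by field_simp; ring

lemma hasDerivAt_tsum_pow_div_mul_factorial (x : ℝ) :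
    HasDerivAt (fun x : ℝ => ∑' k : ℕ, x ^ (k + 1) / ((k + 1) * (Nat.factorial (k + 1))))
      (∑' k : ℕ, x ^ k / (Nat.factorial (k + 1))) x := by
  refine hasDerivAt_tsum_of_isPreconnected (y₀ := 0)
    (g' := fun (k : ℕ) (x : ℝ) => x ^ k / (Nat.factorial (k + 1) : ℝ))
    (summable_pow_div_factorial (|x| + 1)) Metric.isOpen_ball
    (convex_ball (0 : ℝ) (|x| + 1)).isPreconnected (fun k y _ => ?_) (fun k y hy => ?_)
    (Metric.mem_ball_self (by positivity)) (by simp [summable_zero]) (by simp)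
  · refine ((hasDerivAt_pow (k + 1) y).div_const _).congr_deriv ?_
    push_cast
    field_simp
  · rw [norm_div, norm_pow, norm_natCast]
    have hy' : ‖y‖ ≤ |x| + 1 := (mem_ball_zero_iff.1 hy).le
    gcongr
    exact Nat.le_succ k

lemma hasDerivAt_expIntegralEi {x : ℝ} (hx : x ≠ 0) :
    HasDerivAt expIntegralEi (exp x / x) x := by
  refine (((hasDerivAt_log hx).const_add _).add
    (hasDerivAt_tsum_pow_div_mul_factorial x)).congr_deriv ?_
  rw [tsum_pow_div_factorial_succ hx]
  field_simp
  ring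

lemma continuous_expIntegralEi_sub_log : Continuous fun x => expIntegralEi x - log x := by
  have hseries : Continuous fun x : ℝ =>
      ∑' k : ℕ, x ^ (k + 1) / ((k + 1) * (Nat.factorial (k + 1))) :=
    continuous_iff_continuousAt.2 fun x => (hasDerivAt_tsum_pow_div_mul_factorial x).continuousAt
  exact (hseries.const_add eulerMascheroniConstant).congr fun x => by rw [expIntegralEi]; ring

lemma expIntegralEi_zero : expIntegralEi 0 = eulerMascheroniConstant := by
  simp [expIntegralEi]

lemma integral_log_mul_exp_neg :
    ∫ t in Ioi (0 : ℝ), log t * exp (-t) = -eulerMascheroniConstant := by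
  have hGamma : HasDerivAt Complex.GammaIntegral (-eulerMascheroniConstant) 1 := by
    refine Complex.hasDerivAt_Gamma_one.congr_of_eventuallyEq ?_
    filter_upwards [(isOpen_lt continuous_const Complex.continuous_re).mem_nhds
      (by simp : (0 : ℝ) < (1 : ℂ).re)] with z hz using (Complex.Gamma_eq_integral hz).symm
  have h := (Complex.hasDerivAt_GammaIntegral (s := 1) (by simp)).unique hGamma
  simp only [sub_self, Complex.cpow_zero, one_mul, ← Complex.ofReal_mul, ← Complex.ofReal_neg] at h
  exact_mod_cast integral_complex_ofReal.symm.trans h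

lemma integrableOn_log_mul_exp_neg : IntegrableOn (fun t : ℝ => log t * exp (-t)) (Ioi 0) := by
  -- A non-integrable function has integral zero, but `-γ` is not zero.
  refine not_imp_comm.1 integral_undef ?_
  rw [integral_log_mul_exp_neg]
  linarith [one_half_lt_eulerMascheroniConstant]

lemma continuousWithinAt_one_sub_exp_neg_mul_log :
    ContinuousWithinAt (fun t => (1 - exp (-t)) * log t) (Ici 0) 0 := by
  have hbound : ∀ᶠ t in 𝓝[≥] (0 : ℝ), ‖(1 - exp (-t)) * log t‖ ≤ ‖t * log t‖ := by
    filter_upwards [self_mem_nhdsWithin] with t (ht : 0 ≤ t)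
    rw [norm_mul, norm_mul, norm_of_nonneg ht,
      norm_of_nonneg (sub_nonneg.2 (exp_le_one_iff.2 (neg_nonpos.2 ht)))]
    gcongr
    linarith [add_one_le_exp (-t)]
  have hmul : Tendsto (fun t : ℝ => ‖t * log t‖) (𝓝[≥] 0) (𝓝 0) := by
    simpa using (continuous_mul_log.norm.tendsto 0).mono_left nhdsWithin_le_nhds
  simpa [ContinuousWithinAt] using squeeze_zero_norm' hbound hmul

lemma tendsto_log_mul_exp_neg_atTop : Tendsto (fun t => log t * exp (-t)) atTop (𝓝 0) := by
  simpa [exp_neg, div_eq_mul_inv] using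
    (isLittleO_log_id_atTop.trans_isBigO
      (by simpa using! (isLittleO_pow_exp_atTop (n := 1)).isBigO)).tendsto_div_nhds_zero

lemma hasDerivAt_expIntegralEi_neg {t : ℝ} (ht : t ≠ 0) :
    HasDerivAt (fun t => expIntegralEi (-t)) (exp (-t) / t) t :=
  ((hasDerivAt_expIntegralEi (neg_ne_zero.2 ht)).comp t (hasDerivAt_neg t)).congr_deriv (by
    rw [div_neg]; ring)

lemma tendsto_expIntegralEi_neg_atTop : Tendsto (fun t => expIntegralEi (-t)) atTop (𝓝 0) := by
  set F : ℝ → ℝ := fun t => expIntegralEi (-t) - log t * exp (-t)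
  have hderiv : ∀ t ∈ Ioi (0 : ℝ), HasDerivAt F (log t * exp (-t)) t := fun t (ht : 0 < t) =>
    ((hasDerivAt_expIntegralEi_neg ht.ne').sub
      ((hasDerivAt_log ht.ne').mul (hasDerivAt_neg t).exp)).congr_deriv (by ring)
  have hcont : ContinuousWithinAt F (Ici 0) 0 := by
    have h := ((continuous_expIntegralEi_sub_log.comp continuous_neg).continuousWithinAt
      (s := Ici 0) (x := 0)).add continuousWithinAt_one_sub_exp_neg_mul_log
    refine h.congr (fun t _ => ?_) (by simp [F])
    simp only [F, Pi.add_apply, Function.comp_apply, log_neg_eq_log]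
    ring
  have hF := tendsto_limUnder_of_hasDerivAt_of_integrableOn_Ioi hderiv integrableOn_log_mul_exp_neg
  have hlim : limUnder atTop F = 0 := by
    have h := integral_Ioi_of_hasDerivAt_of_tendsto hcont hderiv integrableOn_log_mul_exp_neg hF
    have hF_zero : F 0 = eulerMascheroniConstant := by simp [F, expIntegralEi_zero]
    rw [integral_log_mul_exp_neg, hF_zero] at h
    linarith
  simpa [F, hlim] using hF.add tendsto_log_mul_exp_neg_atTop

lemma integrableOn_exp_neg_div {s : ℝ} (hs : 0 < s) :
    IntegrableOn (fun t : ℝ => exp (-t) / t) (Ioi s) := by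
  refine ((integrableOn_exp_neg_Ioi s).const_mul s⁻¹).mono'
    (Measurable.aestronglyMeasurable (by fun_prop)) ?_
  filter_upwards [ae_restrict_mem measurableSet_Ioi] with t (ht : s < t)
  have ht0 : 0 < t := hs.trans ht
  rw [norm_of_nonneg (by positivity), div_eq_inv_mul]
  gcongr

lemma expIntegralE1_eq_neg_expIntegralEi_neg {s : ℝ} (hs : 0 < s) :
    expIntegralE1 s = -expIntegralEi (-s) := by
  rw [expIntegralE1, integral_Ioi_of_hasDerivAt_of_tendsto'
    (fun t (ht : s ≤ t) => hasDerivAt_expIntegralEi_neg (hs.trans_le ht).ne')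
    (integrableOn_exp_neg_div hs) tendsto_expIntegralEi_neg_atTop, zero_sub]

end ExponentialIntegral

section SineIntegrals

lemma integral_sin_mul_exp_neg_mul_Ioi (s : ℝ) {b : ℝ} (hb : 0 < b) :
    ∫ x in Ioi (0 : ℝ), sin (s * x) * exp (-(b * x)) = s / (s ^ 2 + b ^ 2) := by
  have hre : (-b + s * Complex.I : ℂ).re < 0 := by simpa using hb
  have him (x : ℝ) : sin (s * x) * exp (-(b * x)) =
      (Complex.exp ((-b + s * Complex.I) * x)).im := by
    simp [Complex.exp_im, mul_comm]
  simp_rw [him, ← RCLike.im_to_complex]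
  rw [integral_im (integrableOn_exp_mul_complex_Ioi hre 0), integral_exp_mul_complex_Ioi hre]
  simp [Complex.div_im, Complex.normSq_apply]
  ring

lemma integrableOn_id_mul_exp_neg_mul_Ioi {b : ℝ} (hb : 0 < b) :
    IntegrableOn (fun x : ℝ => x * exp (-(b * x))) (Ioi 0) := by
  simpa using integrableOn_rpow_mul_exp_neg_mul_rpow (p := 1) (s := 1) (by norm_num) one_pos hb

lemma integral_id_mul_exp_neg_mul_Ioi {b : ℝ} (hb : 0 < b) :
    ∫ x in Ioi (0 : ℝ), x * exp (-(b * x)) = 1 / b ^ 2 := by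
  simpa [show (2 : ℝ) - 1 = 1 by norm_num] using integral_rpow_mul_exp_neg_mul_Ioi two_pos hb

lemma abs_sin_mul_le (s : ℝ) {x : ℝ} (hx : 0 ≤ x) : |sin (s * x)| ≤ |s| * x := by
  simpa [abs_mul, abs_of_nonneg hx] using abs_sin_le_abs (x := s * x)

lemma norm_sin_mul_exp_neg_mul_le (s b : ℝ) {x : ℝ} (hx : 0 ≤ x) :
    ‖sin (s * x) * exp (-(b * x))‖ ≤ |s| * (x * exp (-(b * x))) := by
  rw [norm_mul, norm_eq_abs, norm_eq_abs, abs_exp, ← mul_assoc]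
  gcongr
  exact abs_sin_mul_le s hx

lemma integrableOn_sin_mul_exp_neg_mul_Ioi (s : ℝ) {b : ℝ} (hb : 0 < b) :
    IntegrableOn (fun x : ℝ => sin (s * x) * exp (-(b * x))) (Ioi 0) := by
  refine ((integrableOn_id_mul_exp_neg_mul_Ioi hb).const_mul |s|).mono' (by fun_prop) ?_
  filter_upwards [ae_restrict_mem measurableSet_Ioi] with x (hx : 0 < x)
  exact norm_sin_mul_exp_neg_mul_le s b hx.le

lemma integral_norm_sin_mul_exp_neg_mul_Ioi_le (s : ℝ) {b : ℝ} (hb : 0 < b) :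
    ∫ x in Ioi (0 : ℝ), ‖sin (s * x) * exp (-(b * x))‖ ≤ |s| / b ^ 2 := by
  calc ∫ x in Ioi (0 : ℝ), ‖sin (s * x) * exp (-(b * x))‖
      ≤ ∫ x in Ioi (0 : ℝ), |s| * (x * exp (-(b * x))) :=
        setIntegral_mono_on (integrableOn_sin_mul_exp_neg_mul_Ioi s hb).norm
          ((integrableOn_id_mul_exp_neg_mul_Ioi hb).const_mul _) measurableSet_Ioi
          fun x (hx : 0 < x) => norm_sin_mul_exp_neg_mul_le s b hx.le
    _ = |s| / b ^ 2 := by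
        rw [integral_const_mul, integral_id_mul_exp_neg_mul_Ioi hb, mul_one_div]

lemma hasSum_exp_neg_succ_mul {y : ℝ} (hy : 0 < y) :
    HasSum (fun n : ℕ => exp (-((n + 1) * y))) (1 / (exp y - 1)) := by
  have hterm (n : ℕ) : exp (-((n + 1) * y)) = exp (-y) * exp (-y) ^ n := by
    rw [← exp_nat_mul, ← exp_add]
    ring_nf
  have hsum : 1 / (exp y - 1) = exp (-y) * (1 - exp (-y))⁻¹ := by
    have : exp y - 1 ≠ 0 := (sub_pos.2 (one_lt_exp_iff.2 hy)).ne'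
    rw [exp_neg]
    field_simp
  simpa only [hterm, hsum] using (hasSum_geometric_of_lt_one (exp_pos (-y)).le
    (exp_lt_one_iff.2 (neg_lt_zero.2 hy))).mul_left (exp (-y))

lemma mul_exp_half_le_exp_sub_one {y : ℝ} (hy : 0 ≤ y) : y * exp (y / 2) ≤ exp y - 1 := by
  have hsinh : exp y - 1 = 2 * sinh (y / 2) * exp (y / 2) := by
    rw [sinh_eq, mul_div_cancel₀ _ two_ne_zero, sub_mul, ← exp_add, ← exp_add]
    simp
  have hle : y / 2 ≤ sinh (y / 2) := self_le_sinh_iff.2 (by positivity)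
  rw [hsinh]
  gcongr
  linarith

lemma integrableOn_sin_div_exp_sub_one (s : ℝ) {a : ℝ} (ha : 0 < a) :
    IntegrableOn (fun x : ℝ => sin (s * x) / (exp (a * x) - 1)) (Ioi 0) := by
  refine ((integrableOn_exp_mul_Ioi (neg_lt_zero.2 (half_pos ha)) 0).const_mul (|s| / a)).mono'
    (Measurable.aestronglyMeasurable (by fun_prop)) ?_
  filter_upwards [ae_restrict_mem measurableSet_Ioi] with x (hx : 0 < x)
  have hle := mul_exp_half_le_exp_sub_one (mul_pos ha hx).le
  rw [norm_div, norm_eq_abs, norm_of_nonneg (le_trans (by positivity) hle)]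
  calc |sin (s * x)| / (exp (a * x) - 1)
      ≤ |s| * x / (a * x * exp (a * x / 2)) := by
        gcongr
        exact abs_sin_mul_le s hx.le
    _ = |s| / a * exp (-(a / 2) * x) := by
        rw [show -(a / 2) * x = -(a * x / 2) by ring, exp_neg]
        field_simp

lemma hasSum_integral_sin_div_exp_sub_one (s : ℝ) {a : ℝ} (ha : 0 < a) :
    HasSum (fun n : ℕ => s / (s ^ 2 + ((n + 1) * a) ^ 2))
      (∫ x in Ioi (0 : ℝ), sin (s * x) / (exp (a * x) - 1)) := by
  have hb (n : ℕ) : 0 < (n + 1) * a := by positivity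
  have hsummable : Summable fun n : ℕ =>
      ∫ x in Ioi (0 : ℝ), ‖sin (s * x) * exp (-((n + 1) * a * x))‖ := by
    have hsq : Summable fun n : ℕ => |s| / ((n + 1) * a) ^ 2 := by
      have h := ((summable_nat_add_iff 1).2 (summable_one_div_nat_pow.2 one_lt_two)).mul_left
        (|s| / a ^ 2)
      exact h.congr fun n => by push_cast; field_simp
    exact hsq.of_nonneg_of_le (fun n => by positivity) fun n =>
      integral_norm_sin_mul_exp_neg_mul_Ioi_le s (hb n)
  have h := hasSum_integral_of_summable_integral_norm
    (F := fun (n : ℕ) (x : ℝ) => sin (s * x) * exp (-((n + 1) * a * x)))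
    (fun n => integrableOn_sin_mul_exp_neg_mul_Ioi s (hb n)) hsummable
  simp only [integral_sin_mul_exp_neg_mul_Ioi s (hb _)] at h
  have hgeom (x : ℝ) (hx : x ∈ Ioi 0) : sin (s * x) / (exp (a * x) - 1) =
      ∑' n : ℕ, sin (s * x) * exp (-((n + 1) * a * x)) := by
    simpa [mul_assoc, div_eq_mul_inv] using
      ((hasSum_exp_neg_succ_mul (mul_pos ha hx)).mul_left (sin (s * x))).tsum_eq.symm
  rwa [setIntegral_congr_fun measurableSet_Ioi hgeom]

lemma tsum_div_sq_add_succ_sq {y : ℝ} (hy : y ≠ 0) :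
    ∑' n : ℕ, 2 * y / (y ^ 2 + ((n : ℝ) + 1) ^ 2) = π * (cosh (π * y) / sinh (π * y)) - 1 / y := by
  have hmem : (y * Complex.I : ℂ) ∈ Complex.integerComplement := by
    rintro ⟨m, hm⟩
    exact hy (by simpa using (congrArg Complex.im hm).symm)
  have hterm (n : ℕ) : 1 / ((y : ℂ) * Complex.I - (n + 1)) + 1 / (y * Complex.I + (n + 1)) =
      -Complex.I * ((2 * y / (y ^ 2 + ((n : ℝ) + 1) ^ 2) : ℝ) : ℂ) := by
    have hsq : (y : ℂ) ^ 2 + ((n : ℂ) + 1) ^ 2 ≠ 0 := by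
      have : y ^ 2 + ((n : ℝ) + 1) ^ 2 ≠ 0 := by positivity
      exact_mod_cast this
    have hprod : ((y : ℂ) * Complex.I - (n + 1)) * (y * Complex.I + (n + 1)) =
        -(y ^ 2 + ((n : ℂ) + 1) ^ 2) := by
      linear_combination (y : ℂ) ^ 2 * Complex.I_sq
    have hne := hprod.trans_ne (neg_ne_zero.2 hsq)
    rw [div_add_div _ _ (left_ne_zero_of_mul hne) (right_ne_zero_of_mul hne), hprod]
    push_cast
    field_simp
    ring
  have hcot : Complex.cot (π * (y * Complex.I)) =
      -Complex.I * ((cosh (π * y) / sinh (π * y) : ℝ) : ℂ) := by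
    rw [Complex.cot, ← mul_assoc, Complex.cos_mul_I, Complex.sin_mul_I, div_mul_eq_div_div_swap,
      Complex.div_I]
    push_cast
    ring
  have hinv : 1 / ((y : ℂ) * Complex.I) = -Complex.I * ((1 / y : ℝ) : ℂ) := by
    rw [div_mul_eq_div_div, Complex.div_I]
    push_cast
    ring
  have h := cot_series_rep' hmem
  simp_rw [hterm] at h
  rw [tsum_mul_left, ← Complex.ofReal_tsum, hcot, hinv, mul_left_comm, ← mul_sub] at h
  exact_mod_cast (mul_left_cancel₀ (neg_ne_zero.2 Complex.I_ne_zero) h).symm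

lemma integral_sin_div_exp_sub_one {s a : ℝ} (hs : s ≠ 0) (ha : 0 < a) :
    ∫ x in Ioi (0 : ℝ), sin (s * x) / (exp (a * x) - 1) =
      π / (2 * a) * (cosh (π * s / a) / sinh (π * s / a)) - 1 / (2 * s) := by
  have hterm (n : ℕ) : s / (s ^ 2 + ((n + 1) * a) ^ 2) =
      1 / (2 * a) * (2 * (s / a) / ((s / a) ^ 2 + ((n : ℝ) + 1) ^ 2)) := by
    have : s ^ 2 + ((n + 1) * a) ^ 2 ≠ 0 := by positivity
    field_simp
  rw [← (hasSum_integral_sin_div_exp_sub_one s ha).tsum_eq]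
  simp_rw [hterm]
  rw [tsum_mul_left, tsum_div_sq_add_succ_sq (div_ne_zero hs ha.ne'), ← mul_div_assoc]
  field_simp

/-- The Fermi–Dirac weight `1 / (exp (a * x) + 1)`. -/
noncomputable def fermiWeight (a x : ℝ) : ℝ := (exp (a * x) + 1)⁻¹

lemma integrableOn_fermiWeight {a : ℝ} (ha : 0 < a) : IntegrableOn (fermiWeight a) (Ioi 0) := by
  refine (integrableOn_exp_mul_Ioi (neg_lt_zero.2 ha) 0).mono'
    (Measurable.aestronglyMeasurable (by unfold fermiWeight; fun_prop)) (ae_of_all _ fun x => ?_)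
  rw [fermiWeight, norm_of_nonneg (by positivity), neg_mul, exp_neg]
  gcongr
  linarith

lemma fermiWeight_eq_sub {a x : ℝ} (h : a * x ≠ 0) :
    fermiWeight a x = 1 / (exp (a * x) - 1) - 2 / (exp (2 * a * x) - 1) := by
  have hpos : exp (a * x) + 1 ≠ 0 := by positivity
  have hne : exp (a * x) - 1 ≠ 0 := sub_ne_zero.2 (exp_eq_one_iff _ |>.not.2 h)
  have hsq : exp (2 * a * x) - 1 = (exp (a * x) - 1) * (exp (a * x) + 1) := by
    rw [mul_assoc, two_mul, exp_add]
    ring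
  rw [fermiWeight, hsq]
  field_simp
  ring

lemma integral_sin_mul_fermiWeight {s a : ℝ} (hs : s ≠ 0) (ha : 0 < a) :
    ∫ x in Ioi (0 : ℝ), sin (s * x) * fermiWeight a x =
      1 / (2 * s) - π / (2 * a * sinh (π * s / a)) := by
  have hsplit : ∫ x in Ioi (0 : ℝ), sin (s * x) * fermiWeight a x =
      (∫ x in Ioi (0 : ℝ), sin (s * x) / (exp (a * x) - 1)) -
        2 * ∫ x in Ioi (0 : ℝ), sin (s * x) / (exp (2 * a * x) - 1) := by
    rw [← integral_const_mul, ← integral_sub (integrableOn_sin_div_exp_sub_one s ha)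
      ((integrableOn_sin_div_exp_sub_one s (by positivity)).const_mul 2)]
    refine setIntegral_congr_fun measurableSet_Ioi fun x (hx : 0 < x) => ?_
    simp only [fermiWeight_eq_sub (mul_pos ha hx).ne']
    ring
  have hdouble : π * s / a = 2 * (π * s / (2 * a)) := by field_simp
  have hsinh : sinh (π * s / (2 * a)) ≠ 0 :=
    sinh_eq_zero.not.2 (div_ne_zero (mul_ne_zero pi_ne_zero hs) (by positivity))
  have hcosh := (cosh_pos (π * s / (2 * a))).ne'
  rw [hsplit, integral_sin_div_exp_sub_one hs ha, integral_sin_div_exp_sub_one hs (by positivity),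
    hdouble, sinh_two_mul, cosh_two_mul]
  field_simp
  linear_combination -(π * s) * cosh_sq (π * s / (2 * a))

end SineIntegrals

section HyperbolicFunctions

lemma hasDerivAt_tanh (x : ℝ) : HasDerivAt tanh (1 / cosh x ^ 2) x := by
  have h := (hasDerivAt_sinh x).div (hasDerivAt_cosh x) (cosh_pos x).ne'
  refine (h.congr_of_eventuallyEq (Eventually.of_forall tanh_eq_sinh_div_cosh)).congr_deriv ?_
  rw [← sq, ← sq, cosh_sq, add_sub_cancel_left]

lemma hasDerivAt_tanh_half (x : ℝ) :
    HasDerivAt (fun x => tanh (x / 2)) (1 / (2 * cosh (x / 2) ^ 2)) x :=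
  ((hasDerivAt_tanh (x / 2)).comp (h := fun x => x / 2) x
    ((hasDerivAt_id' x).div_const 2)).congr_deriv (by ring)

lemma hasDerivAt_log_tanh_half {x : ℝ} (hx : x ≠ 0) :
    HasDerivAt (fun x => log (tanh (x / 2))) (1 / sinh x) x := by
  have hsinh : sinh (x / 2) ≠ 0 := sinh_eq_zero.not.2 (div_ne_zero hx two_ne_zero)
  have hcosh : cosh (x / 2) ≠ 0 := (cosh_pos _).ne'
  have htanh := tanh_eq_sinh_div_cosh (x / 2)
  refine ((hasDerivAt_tanh_half x).log (htanh.trans_ne (div_ne_zero hsinh hcosh))).congr_deriv ?_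
  rw [htanh, ← mul_div_cancel₀ x two_ne_zero, mul_div_cancel_left₀ _ two_ne_zero, sinh_two_mul]
  field_simp

lemma tanh_half_eq (x : ℝ) : tanh (x / 2) = (1 - exp (-x)) / (1 + exp (-x)) := by
  have hx : exp (-x) = exp (-(x / 2)) ^ 2 := by rw [← exp_nat_mul]; ring_nf
  rw [tanh_eq_sinh_div_cosh, sinh_eq, cosh_eq, hx, exp_neg]
  field_simp

lemma tendsto_log_tanh_half_sub_log :
    Tendsto (fun x => log (tanh (x / 2)) - log x) (𝓝[≠] 0) (𝓝 (-log 2)) := by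
  have hslope : Tendsto (fun x => tanh (x / 2) / x) (𝓝[≠] 0) (𝓝 2⁻¹) := by
    simpa [div_eq_inv_mul] using (hasDerivAt_tanh_half 0).tendsto_slope_zero
  rw [← log_inv]
  refine (hslope.log (by norm_num)).congr' ?_
  filter_upwards [self_mem_nhdsWithin] with x (hx : x ≠ 0)
  exact log_div (mt (fun h => by simpa using tanh_injective (h.trans tanh_zero.symm)) hx) hx

lemma tendsto_log_tanh_half_atTop : Tendsto (fun x => log (tanh (x / 2))) atTop (𝓝 0) := by
  have h : Tendsto (fun x => tanh (x / 2)) atTop (𝓝 1) := by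
    simp_rw [tanh_half_eq]
    simpa [Pi.div_def] using (tendsto_exp_neg_atTop_nhds_zero.const_sub 1).div
      (tendsto_exp_neg_atTop_nhds_zero.const_add 1) (by norm_num)
  simpa using h.log one_ne_zero

lemma hasDerivAt_arctan_exp_neg (x : ℝ) :
    HasDerivAt (fun x => arctan (exp (-x))) (-(1 / (2 * cosh x))) x := by
  refine (hasDerivAt_neg x).exp.arctan.congr_deriv ?_
  rw [cosh_eq, exp_neg]
  field_simp

end HyperbolicFunctions

section FermiTail

/-- The transform `expSinTailTransform` of the weight `fermiWeight (π / 2)` on the half-line. -/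
noncomputable abbrev fermiTail : ℝ → ℝ :=
  expSinTailTransform (volume.restrict (Ioi 0)) (fermiWeight (π / 2))

/-- The closed form of `2 * fermiTail s` for `s ≠ 0`. As `Real.log` is `log |·|`, it makes sense for
negative `s` too, where `expIntegralEi (-s)` is a principal value. -/
noncomputable def fermiTailFormula (s : ℝ) : ℝ :=
  -expIntegralEi (-s) + log (tanh (s / 2)) + 2 * arctan (exp (-s))

lemma hasDerivAt_fermiTailFormula {s : ℝ} (hs : s ≠ 0) :
    HasDerivAt fermiTailFormula (-(exp (-s) * (1 / s - 2 / sinh (2 * s)))) s := by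
  refine (((hasDerivAt_expIntegralEi_neg hs).neg.add (hasDerivAt_log_tanh_half hs)).add
    ((hasDerivAt_arctan_exp_neg s).const_mul 2)).congr_deriv ?_
  have hsinh : sinh s ≠ 0 := sinh_eq_zero.not.2 hs
  have hcosh : cosh s ≠ 0 := (cosh_pos s).ne'
  rw [← cosh_sub_sinh, sinh_two_mul]
  field_simp
  ring

lemma tendsto_fermiTailFormula_nhdsNE_zero :
    Tendsto fermiTailFormula (𝓝[≠] 0) (𝓝 (π / 2 - eulerMascheroniConstant - log 2)) := by
  have hEi : Tendsto (fun s => expIntegralEi (-s) - log s) (𝓝[≠] 0)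
      (𝓝 eulerMascheroniConstant) := by
    simpa [Function.comp_def, expIntegralEi_zero] using
      ((continuous_expIntegralEi_sub_log.comp continuous_neg).tendsto 0).mono_left
        nhdsWithin_le_nhds
  have harctan : Tendsto (fun s => arctan (exp (-s))) (𝓝[≠] 0) (𝓝 (π / 4)) := by
    simpa using (hasDerivAt_arctan_exp_neg 0).continuousAt.tendsto.mono_left nhdsWithin_le_nhds
  convert! (tendsto_log_tanh_half_sub_log.sub hEi).add (harctan.const_mul 2) using 2
  · rw [fermiTailFormula]
    ring
  · ring

lemma tendsto_fermiTailFormula_atTop : Tendsto fermiTailFormula atTop (𝓝 0) := by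
  have harctan := (continuous_arctan.tendsto 0).comp tendsto_exp_neg_atTop_nhds_zero
  have h : Tendsto fermiTailFormula atTop (𝓝 (-0 + 0 + 2 * arctan 0)) :=
    (tendsto_expIntegralEi_neg_atTop.neg.add tendsto_log_tanh_half_atTop).add (harctan.const_mul 2)
  simpa using h

lemma hasDerivAt_two_mul_fermiTail {s : ℝ} (hs : s ≠ 0) :
    HasDerivAt (fun s => 2 * fermiTail s) (-(exp (-s) * (1 / s - 2 / sinh (2 * s)))) s := by
  refine ((hasDerivAt_expSinTailTransform (integrableOn_fermiWeight pi_div_two_pos)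
    s).const_mul 2).congr_deriv ?_
  have hsinh : sinh (2 * s) ≠ 0 := sinh_eq_zero.not.2 (mul_ne_zero two_ne_zero hs)
  have harg : π * s / (π / 2) = 2 * s := by field_simp
  rw [integral_sin_mul_fermiWeight hs pi_div_two_pos, harg]
  field_simp

lemma two_mul_fermiTail_sub_fermiTailFormula {s : ℝ} (hs : s ≠ 0) :
    2 * fermiTail s - fermiTailFormula s =
      2 * fermiTail 0 - (π / 2 - eulerMascheroniConstant - log 2) := by
  refine eq_of_hasDerivAt_zero_of_tendsto_nhdsNE
    (f := fun s => 2 * fermiTail s - fermiTailFormula s) (fun x hx => ?_) ?_ hs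
  · exact ((hasDerivAt_two_mul_fermiTail hx).sub
      (hasDerivAt_fermiTailFormula hx)).congr_deriv (sub_self _)
  · have hcont := (hasDerivAt_expSinTailTransform (integrableOn_fermiWeight pi_div_two_pos)
      0).continuousAt
    exact ((hcont.tendsto.mono_left nhdsWithin_le_nhds).const_mul 2).sub
      tendsto_fermiTailFormula_nhdsNE_zero

lemma two_mul_fermiTail_zero : 2 * fermiTail 0 = π / 2 - eulerMascheroniConstant - log 2 := by
  have hlim : Tendsto (fun s => 2 * fermiTail s - fermiTailFormula s) atTop (𝓝 0) := by
    simpa using ((tendsto_expSinTailTransform_atTop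
      (integrableOn_fermiWeight pi_div_two_pos)).const_mul 2).sub tendsto_fermiTailFormula_atTop
  have hconst := hlim.congr' ((eventually_ne_atTop 0).mono fun s hs =>
    two_mul_fermiTail_sub_fermiTailFormula hs)
  exact sub_eq_zero.1 (tendsto_nhds_unique tendsto_const_nhds hconst)

lemma two_mul_fermiTail_eq {s : ℝ} (hs : s ≠ 0) : 2 * fermiTail s = fermiTailFormula s := by
  simpa [two_mul_fermiTail_zero, sub_eq_zero] using two_mul_fermiTail_sub_fermiTailFormula hs

lemma fermiTailFormula_of_pos {s : ℝ} (hs : 0 < s) :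
    fermiTailFormula s = expIntegralE1 s + log ((1 - exp (-s)) / (1 + exp (-s))) +
      2 * arctan (exp (-s)) := by
  rw [fermiTailFormula, expIntegralE1_eq_neg_expIntegralEi_neg hs, tanh_half_eq]

lemma fermiTailFormula_neg (s : ℝ) :
    fermiTailFormula (-s) = -expIntegralEi s + log ((1 - exp (-s)) / (1 + exp (-s))) +
      2 * (π / 2 - arctan (exp (-s))) := by
  rw [fermiTailFormula, neg_neg, neg_div, tanh_neg, log_neg_eq_log, tanh_half_eq,
    ← arctan_inv_of_pos (exp_pos (-s)), ← exp_neg, neg_neg]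

lemma integral_cos_mul_fermiWeight (s : ℝ) :
    ∫ x in Ioi (0 : ℝ), cos (s * x) * (2 * x) / ((1 + x ^ 2) * (exp (π * x / 2) + 1)) =
      exp s * fermiTail s + exp (-s) * fermiTail (-s) := by
  rw [← integral_cos_mul_eq_expSinTailTransform (integrableOn_fermiWeight pi_div_two_pos)]
  refine integral_congr_ae (ae_of_all _ fun x => ?_)
  simp only [fermiWeight, div_mul_eq_mul_div π 2 x]
  field_simp

end FermiTail

/-- For every `s > 0`,
`∫₀^∞ cos(s x) · 2x / ((1+x²)(e^{πx/2} + 1)) dx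
  = (π/2) e^{−s} + 2 sinh(s) arctan(e^{−s}) + cosh(s) log((1−e^{−s})/(1+e^{−s}))
    − (e^{−s} Ei(s) − e^{s} E₁(s))/2`,
and at `s = 0`, `∫₀^∞ 2x/((1+x²)(e^{πx/2} + 1)) dx = π/2 − γ − log 2`. -/
theorem stmt_14 :
    (∀ s : ℝ, 0 < s →
      ∫ x in Ioi (0 : ℝ),
          Real.cos (s * x) * (2 * x) / ((1 + x ^ 2) * (Real.exp (Real.pi * x / 2) + 1)) =
        Real.pi / 2 * Real.exp (-s) + 2 * Real.sinh s * Real.arctan (Real.exp (-s)) +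
          Real.cosh s * Real.log ((1 - Real.exp (-s)) / (1 + Real.exp (-s))) -
          (Real.exp (-s) * expIntegralEi s - Real.exp s * expIntegralE1 s) / 2) ∧
    (∫ x in Ioi (0 : ℝ), 2 * x / ((1 + x ^ 2) * (Real.exp (Real.pi * x / 2) + 1)) =
        Real.pi / 2 - Real.eulerMascheroniConstant - Real.log 2) := by
  refine ⟨fun s hs => ?_, ?_⟩
  · have hpos := (two_mul_fermiTail_eq hs.ne').trans (fermiTailFormula_of_pos hs)
    have hneg := (two_mul_fermiTail_eq (neg_ne_zero.2 hs.ne')).trans (fermiTailFormula_neg s)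
    rw [integral_cos_mul_fermiWeight, sinh_eq, cosh_eq]
    linear_combination exp s / 2 * hpos + exp (-s) / 2 * hneg
  · simpa [two_mul, two_mul_fermiTail_zero.symm] using integral_cos_mul_fermiWeight 0
end

section
/- Let μ be a Borel probability measure on [0,∞) which is not a Dirac mass, let φ be its cumulant function, set l := lim_{λ→∞} φ(λ) = −log μ({0}) ∈ (0,∞], and let Ψ : [0,l) → [0,∞) be the inverse of the strictly increasing function φ. Let p > 0. Then (Ψ^p)' > 0 on (0,l); Ψ^p is convex on (0,l) if, and only if, λ ↦ λ^{1−p} φ'(λ) is non-increasing on (0,∞), and Ψ^p is concave on (0,l) if, and only if, λ ↦ λ^{1−p} φ'(λ) is non-decreasing on (0,∞). In particular, if p ≥ 1 then Ψ^p is strictly convex on (0,l) and (Ψ^p)'(0+) = p·lim_{λ→0+} λ^{p−1}/φ'(λ) exists in [0,∞). -/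
open MeasureTheory Set Filter

/-!
Write `F = g ∘ Ψ` with `g y = y ^ p` and `Ψ` the inverse of `φ`. The chain rule gives
`F' (φ l) = g' l / φ' l = p / (l ^ (1 - p) * φ' l)`, and `l ↦ φ l` is an increasing change of
variables, so `F` is convex (concave) exactly when `l ^ (1 - p) * φ' l` is nonincreasing
(nondecreasing). For a cumulant function, `φ' l` and `-φ'' l` are the mean and the variance of the
law obtained by tilting `μ` by `exp (-l x)`. Both are positive when `μ` is not a Dirac mass, so
`φ'` is strictly decreasing; hence for `p ≥ 1` the ratio `g' / φ'` is strictly increasing and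
nonnegative, which gives strict convexity and a finite limit at `0`.
-/

section StrictMono

open scoped Topology

variable {α β : Type*} [ConditionallyCompleteLinearOrder α] [DenselyOrdered α]
  [TopologicalSpace α] [OrderTopology α] [LinearOrder β] [TopologicalSpace β] [OrderTopology β]
  {f : α → β} {s : Set α} {a : α}

lemma map_nhdsGT_of_strictMonoOn [NoMaxOrder α] (hs : s ∈ 𝓝[≥] a) (hcont : ContinuousOn f s)
    (hmono : StrictMonoOn f s) : map f (𝓝[>] a) = 𝓝[>] (f a) := by
  have has : a ∈ s := mem_of_mem_nhdsWithin self_mem_Ici hs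
  refine le_antisymm (tendsto_nhdsWithin_iff.2 ⟨?_, ?_⟩) fun u hu => ?_
  · exact ((hcont a has).mono_of_mem_nhdsWithin hs).mono Ioi_subset_Ici_self
  · filter_upwards [self_mem_nhdsWithin, nhdsWithin_mono a Ioi_subset_Ici_self hs] with x hax hxs
    exact hmono has hxs hax
  · obtain ⟨b, hab, hbu⟩ := mem_nhdsGT_iff_exists_Ioo_subset.1 (mem_map.1 hu)
    obtain ⟨c, hac, hcs⟩ := mem_nhdsGE_iff_exists_Icc_subset.1 hs
    have ham : a < min b c := lt_min hab hac
    have hms : Icc a (min b c) ⊆ s := (Icc_subset_Icc_right (min_le_right b c)).trans hcs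
    filter_upwards [Ioo_mem_nhdsGT (hmono has (hms (right_mem_Icc.2 ham.le)) ham)] with y hy
    obtain ⟨x, hx, rfl⟩ := intermediate_value_Ioo ham.le (hcont.mono hms) hy
    exact hbu ⟨hx.1, hx.2.trans_le (min_le_left b c)⟩

lemma map_nhdsLT_of_strictMonoOn [NoMinOrder α] (hs : s ∈ 𝓝[≤] a) (hcont : ContinuousOn f s)
    (hmono : StrictMonoOn f s) : map f (𝓝[<] a) = 𝓝[<] (f a) :=
  map_nhdsGT_of_strictMonoOn (α := αᵒᵈ) (β := βᵒᵈ) hs hcont hmono.dual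

lemma map_nhds_of_strictMonoOn [NoMinOrder α] [NoMaxOrder α] (hs : s ∈ 𝓝 a)
    (hcont : ContinuousOn f s) (hmono : StrictMonoOn f s) : map f (𝓝 a) = 𝓝 (f a) := by
  rw [← nhdsNE_sup_pure a, ← nhdsLT_sup_nhdsGT, map_sup, map_sup, map_pure,
    map_nhdsLT_of_strictMonoOn (mem_nhdsWithin_of_mem_nhds hs) hcont hmono,
    map_nhdsGT_of_strictMonoOn (mem_nhdsWithin_of_mem_nhds hs) hcont hmono,
    nhdsLT_sup_nhdsGT, nhdsNE_sup_pure]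

lemma isOpen_image_of_strictMonoOn [NoMinOrder α] [NoMaxOrder α] (hs : IsOpen s)
    (hcont : ContinuousOn f s) (hmono : StrictMonoOn f s) : IsOpen (f '' s) := by
  refine isOpen_iff_mem_nhds.2 (forall_mem_image.2 fun a ha => ?_)
  rw [← map_nhds_of_strictMonoOn (hs.mem_nhds ha) hcont hmono]
  exact image_mem_map (hs.mem_nhds ha)

end StrictMono

lemma convexOn_iff_monotoneOn_deriv {s : Set ℝ} {f : ℝ → ℝ} (hs : IsOpen s) (hconv : Convex ℝ s)
    (hf : DifferentiableOn ℝ f s) : ConvexOn ℝ s f ↔ MonotoneOn (deriv f) s := by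
  refine ⟨fun h => h.monotoneOn_deriv fun x hx => hf.differentiableAt (hs.mem_nhds hx),
    fun h => ?_⟩
  rw [← hs.interior_eq] at h
  exact h.convexOn_of_deriv hconv hf.continuousOn (hf.mono interior_subset)

section InverseFunction

open scoped Topology

variable {I : Set ℝ} {φ ψ g : ℝ → ℝ}

lemma continuousOn_of_deriv_pos (hφ : ∀ x ∈ I, 0 < deriv φ x) : ContinuousOn φ I := fun x hx =>
  (differentiableAt_of_deriv_ne_zero (hφ x hx).ne').continuousAt.continuousWithinAt

lemma strictMonoOn_of_isOpen_of_deriv_pos (hI : IsOpen I) (hconv : Convex ℝ I)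
    (hφ : ∀ x ∈ I, 0 < deriv φ x) : StrictMonoOn φ I :=
  strictMonoOn_of_deriv_pos hconv (continuousOn_of_deriv_pos hφ) (by rwa [hI.interior_eq])

lemma isOpen_image_of_deriv_pos (hI : IsOpen I) (hconv : Convex ℝ I)
    (hφ : ∀ x ∈ I, 0 < deriv φ x) : IsOpen (φ '' I) :=
  isOpen_image_of_strictMonoOn hI (continuousOn_of_deriv_pos hφ)
    (strictMonoOn_of_isOpen_of_deriv_pos hI hconv hφ)

lemma convex_image_of_continuousOn (hconv : Convex ℝ I) (hφ : ContinuousOn φ I) :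
    Convex ℝ (φ '' I) :=
  (hconv.isPreconnected.image φ hφ).ordConnected.convex

lemma hasDerivAt_leftInverse (hI : IsOpen I) (hconv : Convex ℝ I)
    (hφ : ∀ x ∈ I, 0 < deriv φ x) (hψ : LeftInvOn ψ φ I) {x : ℝ} (hx : x ∈ I) :
    HasDerivAt ψ (deriv φ x)⁻¹ (φ x) := by
  have hmap : map φ (𝓝 x) = 𝓝 (φ x) := map_nhds_of_strictMonoOn (hI.mem_nhds hx)
    (continuousOn_of_deriv_pos hφ) (strictMonoOn_of_isOpen_of_deriv_pos hI hconv hφ)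
  have hψφ : ∀ᶠ z in 𝓝 x, ψ (φ z) = z := eventually_of_mem (hI.mem_nhds hx) hψ
  have hcont : ContinuousAt ψ (φ x) := by
    rw [ContinuousAt, ← hmap, tendsto_map'_iff, hψ hx]
    exact tendsto_id.congr' (hψφ.mono fun z hz => hz.symm)
  have hderiv : HasDerivAt φ (deriv φ x) (ψ (φ x)) := by
    rw [hψ hx]
    exact (differentiableAt_of_deriv_ne_zero (hφ x hx).ne').hasDerivAt
  refine hderiv.of_local_left_inverse hcont (hφ x hx).ne' ?_
  rw [← hmap, eventually_map]
  exact hψφ.mono fun z hz => congrArg φ hz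

lemma hasDerivAt_comp_leftInverse (hI : IsOpen I) (hconv : Convex ℝ I)
    (hφ : ∀ x ∈ I, 0 < deriv φ x) (hψ : LeftInvOn ψ φ I) {x : ℝ} (hx : x ∈ I)
    (hg : DifferentiableAt ℝ g x) :
    HasDerivAt (fun y => g (ψ y)) (deriv g x / deriv φ x) (φ x) := by
  have hgψ : HasDerivAt g (deriv g x) (ψ (φ x)) := by
    rw [hψ hx]
    exact hg.hasDerivAt
  exact hgψ.comp (φ x) (hasDerivAt_leftInverse hI hconv hφ hψ hx)

lemma differentiableOn_comp_leftInverse (hI : IsOpen I) (hconv : Convex ℝ I)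
    (hφ : ∀ x ∈ I, 0 < deriv φ x) (hψ : LeftInvOn ψ φ I) (hg : DifferentiableOn ℝ g I) :
    DifferentiableOn ℝ (fun y => g (ψ y)) (φ '' I) := by
  rintro _ ⟨x, hx, rfl⟩
  exact (hasDerivAt_comp_leftInverse hI hconv hφ hψ hx
    (hg.differentiableAt (hI.mem_nhds hx))).differentiableAt.differentiableWithinAt

lemma deriv_comp_leftInverse (hI : IsOpen I) (hconv : Convex ℝ I)
    (hφ : ∀ x ∈ I, 0 < deriv φ x) (hψ : LeftInvOn ψ φ I) (hg : DifferentiableOn ℝ g I) :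
    EqOn (fun x => deriv (fun y => g (ψ y)) (φ x)) (fun x => deriv g x / deriv φ x) I :=
  fun _ hx => (hasDerivAt_comp_leftInverse hI hconv hφ hψ hx
    (hg.differentiableAt (hI.mem_nhds hx))).deriv

lemma convexOn_comp_leftInverse_iff (hI : IsOpen I) (hconv : Convex ℝ I)
    (hφ : ∀ x ∈ I, 0 < deriv φ x) (hψ : LeftInvOn ψ φ I) (hg : DifferentiableOn ℝ g I) :
    ConvexOn ℝ (φ '' I) (fun y => g (ψ y)) ↔
      MonotoneOn (fun x => deriv g x / deriv φ x) I := by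
  have hmono := strictMonoOn_of_isOpen_of_deriv_pos hI hconv hφ
  have hderiv := deriv_comp_leftInverse hI hconv hφ hψ hg
  rw [convexOn_iff_monotoneOn_deriv (isOpen_image_of_deriv_pos hI hconv hφ)
    (convex_image_of_continuousOn hconv (continuousOn_of_deriv_pos hφ))
    (differentiableOn_comp_leftInverse hI hconv hφ hψ hg), ← hderiv.congr_monotoneOn]
  refine ⟨fun h => h.comp hmono.monotoneOn (mapsTo_image φ I), ?_⟩
  rintro h _ ⟨x, hx, rfl⟩ _ ⟨y, hy, rfl⟩ hxy
  exact h hx hy ((hmono.le_iff_le hx hy).1 hxy)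

lemma concaveOn_comp_leftInverse_iff (hI : IsOpen I) (hconv : Convex ℝ I)
    (hφ : ∀ x ∈ I, 0 < deriv φ x) (hψ : LeftInvOn ψ φ I) (hg : DifferentiableOn ℝ g I) :
    ConcaveOn ℝ (φ '' I) (fun y => g (ψ y)) ↔
      AntitoneOn (fun x => deriv g x / deriv φ x) I := by
  have hneg := convexOn_comp_leftInverse_iff hI hconv hφ hψ hg.neg
  simp only [Pi.neg_apply, deriv.neg, neg_div] at hneg
  rw [← neg_convexOn_iff]
  refine hneg.trans ⟨fun h x hx y hy hxy => neg_le_neg_iff.1 (h hx hy hxy),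
    fun h => h.neg⟩

lemma strictConvexOn_comp_leftInverse (hI : IsOpen I) (hconv : Convex ℝ I)
    (hφ : ∀ x ∈ I, 0 < deriv φ x) (hψ : LeftInvOn ψ φ I) (hg : DifferentiableOn ℝ g I)
    (h : StrictMonoOn (fun x => deriv g x / deriv φ x) I) :
    StrictConvexOn ℝ (φ '' I) (fun y => g (ψ y)) := by
  have hmono := strictMonoOn_of_isOpen_of_deriv_pos hI hconv hφ
  have hderiv := deriv_comp_leftInverse hI hconv hφ hψ hg
  refine StrictMonoOn.strictConvexOn_of_deriv
    (convex_image_of_continuousOn hconv (continuousOn_of_deriv_pos hφ))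
    (differentiableOn_comp_leftInverse hI hconv hφ hψ hg).continuousOn ?_
  rw [(isOpen_image_of_deriv_pos hI hconv hφ).interior_eq]
  rintro _ ⟨x, hx, rfl⟩ _ ⟨y, hy, rfl⟩ hxy
  exact hderiv.congr_strictMonoOn.2 h hx hy ((hmono.lt_iff_lt hx hy).1 hxy)

lemma tendsto_deriv_comp_leftInverse_nhdsGT_iff {a : ℝ} {u : Filter ℝ}
    (hcont : ContinuousOn φ (Ici a)) (hφ : ∀ x ∈ Ioi a, 0 < deriv φ x)
    (hψ : LeftInvOn ψ φ (Ioi a)) (hg : DifferentiableOn ℝ g (Ioi a)) :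
    Tendsto (deriv fun y => g (ψ y)) (𝓝[>] (φ a)) u ↔
      Tendsto (fun x => deriv g x / deriv φ x) (𝓝[>] a) u := by
  have hmono : StrictMonoOn φ (Ici a) :=
    strictMonoOn_of_deriv_pos (convex_Ici a) hcont (by rwa [interior_Ici])
  rw [← map_nhdsGT_of_strictMonoOn self_mem_nhdsWithin hcont hmono, tendsto_map'_iff]
  exact tendsto_congr' (deriv_comp_leftInverse isOpen_Ioi (convex_Ioi a) hφ hψ
    hg).eventuallyEq_nhdsWithin

end InverseFunction

section Inv

variable {ι 𝕜 : Type*} [Preorder ι] [Field 𝕜] [LinearOrder 𝕜] [IsStrictOrderedRing 𝕜]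
  {s : Set ι} {h : ι → 𝕜} {c : 𝕜}

lemma monotoneOn_const_mul_inv_iff (hc : 0 < c) (hpos : ∀ x ∈ s, 0 < h x) :
    MonotoneOn (fun x => c * (h x)⁻¹) s ↔ AntitoneOn h s := by
  refine forall₂_congr fun x hx => forall₃_congr fun y hy _ => ?_
  rw [mul_le_mul_iff_right₀ hc, inv_le_inv₀ (hpos x hx) (hpos y hy)]

lemma antitoneOn_const_mul_inv_iff (hc : 0 < c) (hpos : ∀ x ∈ s, 0 < h x) :
    AntitoneOn (fun x => c * (h x)⁻¹) s ↔ MonotoneOn h s := by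
  refine forall₂_congr fun x hx => forall₃_congr fun y hy _ => ?_
  rw [mul_le_mul_iff_right₀ hc, inv_le_inv₀ (hpos y hy) (hpos x hx)]

end Inv

section Rpow

open scoped Topology

variable {I : Set ℝ} {φ ψ d : ℝ → ℝ} {p : ℝ}

lemma differentiableOn_rpow_const_of_subset_Ioi (hI : I ⊆ Ioi 0) :
    DifferentiableOn ℝ (fun x => x ^ p) I := fun _ hx =>
  (Real.differentiableAt_rpow_const_of_ne p (hI hx).ne').differentiableWithinAt

lemma deriv_rpow_const_div_eqOn (hI : I ⊆ Ioi 0) :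
    EqOn (fun x => deriv (fun y => y ^ p) x / d x) (fun x => p * (x ^ (p - 1) / d x)) I :=
  fun _ hx => by
    have hderiv := (Real.hasDerivAt_rpow_const (p := p) (Or.inl (hI hx).ne')).deriv
    simp only [hderiv, mul_div_assoc]

lemma mul_rpow_div_eqOn (hI : I ⊆ Ioi 0) :
    EqOn (fun x => p * (x ^ (p - 1) / d x)) (fun x => p * (x ^ (1 - p) * d x)⁻¹) I :=
  fun _ hx => by
    simp only [mul_inv, ← Real.rpow_neg (hI hx).le, neg_sub, div_eq_mul_inv]

lemma convexOn_leftInverse_rpow_iff (hIo : IsOpen I) (hconv : Convex ℝ I) (hI : I ⊆ Ioi 0)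
    (hφ : ∀ x ∈ I, 0 < deriv φ x) (hψ : LeftInvOn ψ φ I) (hp : 0 < p) :
    ConvexOn ℝ (φ '' I) (fun y => ψ y ^ p) ↔
      AntitoneOn (fun x => x ^ (1 - p) * deriv φ x) I := by
  rw [convexOn_comp_leftInverse_iff (g := fun x => x ^ p) hIo hconv hφ hψ
    (differentiableOn_rpow_const_of_subset_Ioi hI),
    ((deriv_rpow_const_div_eqOn hI).trans (mul_rpow_div_eqOn hI)).congr_monotoneOn]
  exact monotoneOn_const_mul_inv_iff hp fun x hx =>
    mul_pos (Real.rpow_pos_of_pos (hI hx) _) (hφ x hx)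

lemma concaveOn_leftInverse_rpow_iff (hIo : IsOpen I) (hconv : Convex ℝ I) (hI : I ⊆ Ioi 0)
    (hφ : ∀ x ∈ I, 0 < deriv φ x) (hψ : LeftInvOn ψ φ I) (hp : 0 < p) :
    ConcaveOn ℝ (φ '' I) (fun y => ψ y ^ p) ↔
      MonotoneOn (fun x => x ^ (1 - p) * deriv φ x) I := by
  rw [concaveOn_comp_leftInverse_iff (g := fun x => x ^ p) hIo hconv hφ hψ
    (differentiableOn_rpow_const_of_subset_Ioi hI),
    ((deriv_rpow_const_div_eqOn hI).trans (mul_rpow_div_eqOn hI)).congr_antitoneOn]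
  exact antitoneOn_const_mul_inv_iff hp fun x hx =>
    mul_pos (Real.rpow_pos_of_pos (hI hx) _) (hφ x hx)

lemma deriv_leftInverse_rpow_pos (hIo : IsOpen I) (hconv : Convex ℝ I) (hI : I ⊆ Ioi 0)
    (hφ : ∀ x ∈ I, 0 < deriv φ x) (hψ : LeftInvOn ψ φ I) (hp : 0 < p) :
    ∀ y ∈ φ '' I, 0 < deriv (fun y => ψ y ^ p) y := by
  rintro _ ⟨x, hx, rfl⟩
  have hderiv : deriv (fun y => ψ y ^ p) (φ x) = p * (x ^ (p - 1) / deriv φ x) :=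
    ((deriv_comp_leftInverse (g := fun x => x ^ p) hIo hconv hφ hψ
      (differentiableOn_rpow_const_of_subset_Ioi hI)).trans (deriv_rpow_const_div_eqOn hI)) hx
  rw [hderiv]
  exact mul_pos hp (div_pos (Real.rpow_pos_of_pos (hI hx) _) (hφ x hx))

lemma monotoneOn_mul_rpow_div (hI : I ⊆ Ioi 0) (hd : ∀ x ∈ I, 0 < d x) (hanti : AntitoneOn d I)
    (hp : 1 ≤ p) : MonotoneOn (fun x => p * (x ^ (p - 1) / d x)) I := fun _ hx y hy hxy =>
  mul_le_mul_of_nonneg_left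
    (div_le_div₀ (Real.rpow_nonneg (hI hy).le _)
      (Real.rpow_le_rpow (hI hx).le hxy (sub_nonneg.2 hp)) (hd y hy) (hanti hx hy hxy))
    (zero_le_one.trans hp)

lemma strictMonoOn_mul_rpow_div (hI : I ⊆ Ioi 0) (hd : ∀ x ∈ I, 0 < d x)
    (hanti : StrictAntiOn d I) (hp : 1 ≤ p) :
    StrictMonoOn (fun x => p * (x ^ (p - 1) / d x)) I := fun _ hx y hy hxy =>
  mul_lt_mul_of_pos_left
    (div_lt_div₀' (Real.rpow_le_rpow (hI hx).le hxy.le (sub_nonneg.2 hp)) (hanti hx hy hxy)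
      (Real.rpow_pos_of_pos (hI hy) _) (hd y hy))
    (zero_lt_one.trans_le hp)

lemma strictConvexOn_leftInverse_rpow (hIo : IsOpen I) (hconv : Convex ℝ I) (hI : I ⊆ Ioi 0)
    (hφ : ∀ x ∈ I, 0 < deriv φ x) (hanti : StrictAntiOn (deriv φ) I) (hψ : LeftInvOn ψ φ I)
    (hp : 1 ≤ p) : StrictConvexOn ℝ (φ '' I) (fun y => ψ y ^ p) :=
  strictConvexOn_comp_leftInverse (g := fun x => x ^ p) hIo hconv hφ hψ
    (differentiableOn_rpow_const_of_subset_Ioi hI)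
    ((deriv_rpow_const_div_eqOn hI).congr_strictMonoOn.2
      (strictMonoOn_mul_rpow_div hI hφ hanti hp))

lemma exists_tendsto_nhdsGT_of_monotoneOn_of_nonneg {f : ℝ → ℝ} {a : ℝ}
    (hmono : MonotoneOn f (Ioi a)) (hnonneg : ∀ x ∈ Ioi a, 0 ≤ f x) :
    ∃ L : ℝ, 0 ≤ L ∧ Tendsto f (𝓝[>] a) (𝓝 L) := by
  have hlim := hmono.tendsto_nhdsGT ⟨0, forall_mem_image.2 hnonneg⟩
  exact ⟨_, ge_of_tendsto hlim (eventually_of_mem self_mem_nhdsWithin hnonneg), hlim⟩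

lemma tendsto_deriv_leftInverse_rpow_nhdsGT_iff {a : ℝ} {u : Filter ℝ} (ha : 0 ≤ a)
    (hcont : ContinuousOn φ (Ici a)) (hφ : ∀ x ∈ Ioi a, 0 < deriv φ x)
    (hψ : LeftInvOn ψ φ (Ioi a)) :
    Tendsto (deriv fun y => ψ y ^ p) (𝓝[>] (φ a)) u ↔
      Tendsto (fun x => p * (x ^ (p - 1) / deriv φ x)) (𝓝[>] a) u := by
  have hI : Ioi a ⊆ Ioi 0 := Ioi_subset_Ioi ha
  exact (tendsto_deriv_comp_leftInverse_nhdsGT_iff (g := fun x => x ^ p) hcont hφ hψ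
    (differentiableOn_rpow_const_of_subset_Ioi hI)).trans
    (tendsto_congr' (deriv_rpow_const_div_eqOn hI).eventuallyEq_nhdsWithin)

lemma exists_tendsto_deriv_leftInverse_rpow {a : ℝ} (ha : 0 ≤ a)
    (hcont : ContinuousOn φ (Ici a)) (hφ : ∀ x ∈ Ioi a, 0 < deriv φ x)
    (hanti : AntitoneOn (deriv φ) (Ioi a)) (hψ : LeftInvOn ψ φ (Ioi a)) (hp : 1 ≤ p) :
    ∃ L : ℝ, 0 ≤ L ∧ Tendsto (deriv fun y => ψ y ^ p) (𝓝[>] (φ a)) (𝓝 L) ∧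
      Tendsto (fun x => p * (x ^ (p - 1) / deriv φ x)) (𝓝[>] a) (𝓝 L) := by
  have hI : Ioi a ⊆ Ioi 0 := Ioi_subset_Ioi ha
  obtain ⟨L, hL, hlim⟩ := exists_tendsto_nhdsGT_of_monotoneOn_of_nonneg
    (monotoneOn_mul_rpow_div hI hφ hanti hp) fun x hx =>
      mul_nonneg (zero_le_one.trans hp)
        (div_nonneg (Real.rpow_nonneg (hI hx).le _) (hφ x hx).le)
  exact ⟨L, hL, (tendsto_deriv_leftInverse_rpow_nhdsGT_iff ha hcont hφ hψ).2 hlim, hlim⟩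

end Rpow

section Cumulant

open ProbabilityTheory

lemma eq_dirac_of_ae_eq {Ω : Type*} [MeasurableSpace Ω] {μ : Measure Ω} [IsProbabilityMeasure μ]
    {a : Ω} (h : ∀ᵐ ω ∂μ, ω = a) : μ = Measure.dirac a := by
  calc μ = μ.map id := Measure.map_id.symm
    _ = μ.map fun _ => a := Measure.map_congr h
    _ = Measure.dirac a := by rw [Measure.map_const, measure_univ, one_smul]

variable {Ω : Type*} {mΩ : MeasurableSpace Ω} {X : Ω → ℝ} {μ : Measure Ω} {t : ℝ}

lemma deriv_cgf_pos (ht : t ∈ interior (integrableExpSet X μ)) (hX : 0 ≤ᵐ[μ] X)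
    (hX0 : ¬ X =ᵐ[μ] 0) : 0 < deriv (cgf X μ) t := by
  have hμ : μ ≠ 0 := by
    rintro rfl
    exact hX0 (by simp [EventuallyEq])
  rw [deriv_cgf ht]
  refine div_pos ?_ (mgf_pos' hμ (interior_subset (s := integrableExpSet X μ) ht))
  have hnonneg : 0 ≤ᵐ[μ] fun ω => X ω * Real.exp (t * X ω) :=
    hX.mono fun ω hω => mul_nonneg hω (Real.exp_nonneg _)
  have hint : Integrable (fun ω => X ω * Real.exp (t * X ω)) μ := by
    simpa using integrable_pow_mul_exp_of_mem_interior_integrableExpSet ht 1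
  refine (integral_nonneg_of_ae hnonneg).lt_of_ne' fun hzero => hX0 ?_
  filter_upwards [(integral_eq_zero_iff_of_nonneg_ae hnonneg hint).1 hzero] with ω hω
  exact (mul_eq_zero.1 hω).resolve_right (Real.exp_ne_zero _)

lemma iteratedDeriv_two_cgf_pos (ht : t ∈ interior (integrableExpSet X μ))
    (hX : ∀ c : ℝ, ¬ X =ᵐ[μ] fun _ => c) : 0 < iteratedDeriv 2 (cgf X μ) t := by
  have hint : Integrable (fun ω => Real.exp (t * X ω)) μ :=
    interior_subset (s := integrableExpSet X μ) ht
  have : NeZero μ := ⟨by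
    rintro rfl
    exact hX 0 (by simp [EventuallyEq])⟩
  have := isProbabilityMeasure_tilted hint
  rw [← variance_tilted_mul ht]
  refine (variance_nonneg _ _).lt_of_ne' fun hzero => ?_
  exact hX _ ((absolutelyContinuous_tilted hint).ae_eq
    (ae_eq_integral_of_variance_eq_zero (memLp_tilted_mul ht 2) hzero))

lemma strictMonoOn_deriv_cgf (hX : ∀ c : ℝ, ¬ X =ᵐ[μ] fun _ => c) :
    StrictMonoOn (deriv (cgf X μ)) (interior (integrableExpSet X μ)) := by
  refine strictMonoOn_of_deriv_pos convex_integrableExpSet.interior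
    (analyticOnNhd_cgf.deriv.continuousOn) fun t ht => ?_
  rw [interior_interior] at ht
  simpa only [iteratedDeriv_succ, iteratedDeriv_zero] using iteratedDeriv_two_cgf_pos ht hX

lemma Iic_subset_integrableExpSet [IsFiniteMeasure μ] (hXm : AEMeasurable X μ)
    (hX : 0 ≤ᵐ[μ] X) : Iic 0 ⊆ integrableExpSet X μ := fun t ht => by
  have hneg := integrable_exp_mul_of_le (-t) 0 (neg_nonneg.2 ht) hXm.neg
    (hX.mono fun ω hω => neg_nonpos.2 hω)
  simpa only [Pi.neg_apply, neg_mul_neg, integrableExpSet, mem_ofPred_eq] using hneg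

lemma Iio_subset_interior_integrableExpSet [IsFiniteMeasure μ] (hXm : AEMeasurable X μ)
    (hX : 0 ≤ᵐ[μ] X) : Iio 0 ⊆ interior (integrableExpSet X μ) :=
  interior_maximal (Iio_subset_Iic_self.trans (Iic_subset_integrableExpSet hXm hX)) isOpen_Iio

lemma continuousOn_mgf_Iic [IsFiniteMeasure μ] (hXm : AEMeasurable X μ) (hX : 0 ≤ᵐ[μ] X) :
    ContinuousOn (mgf X μ) (Iic 0) := by
  refine continuousOn_of_dominated (bound := fun _ => 1)
    (fun t _ => aemeasurable_exp_mul t hXm) (fun t ht => ?_) (integrable_const 1)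
    (ae_of_all μ fun ω => by fun_prop)
  filter_upwards [hX] with ω hω
  rw [Real.norm_of_nonneg (Real.exp_nonneg _), Real.exp_le_one_iff]
  exact mul_nonpos_of_nonpos_of_nonneg ht hω

/-- The cumulant function `l ↦ -log 𝔼[exp (-l X)]` of a random variable `X`, that is, of its law
under `μ`. It is Mathlib's `cgf` with both the argument and the value negated. -/
noncomputable def cumulantFun (X : Ω → ℝ) (μ : Measure Ω) (l : ℝ) : ℝ := -cgf X μ (-l)

lemma cumulantFun_zero [IsZeroOrProbabilityMeasure μ] : cumulantFun X μ 0 = 0 := by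
  rw [cumulantFun, neg_zero, cgf_zero, neg_zero]

lemma deriv_cumulantFun (l : ℝ) : deriv (cumulantFun X μ) l = deriv (cgf X μ) (-l) := by
  unfold cumulantFun
  rw [deriv.fun_neg, deriv_comp_neg, neg_neg]

variable [IsFiniteMeasure μ]

lemma continuousOn_cumulantFun (hXm : AEMeasurable X μ) (hX : 0 ≤ᵐ[μ] X) :
    ContinuousOn (cumulantFun X μ) (Ici 0) := by
  rcases eq_or_ne μ 0 with rfl | hμ
  · have hzero : cumulantFun X (0 : Measure Ω) = 0 := by
      ext l
      simp [cumulantFun]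
    rw [hzero]
    exact continuousOn_const
  have hcgf : ContinuousOn (cgf X μ) (Iic 0) := (continuousOn_mgf_Iic hXm hX).log fun t ht =>
    (mgf_pos' hμ (Iic_subset_integrableExpSet hXm hX ht)).ne'
  exact (hcgf.comp continuousOn_neg fun l hl => mem_Iic.2 (neg_nonpos.2 hl)).neg

lemma deriv_cumulantFun_pos (hXm : AEMeasurable X μ) (hX : 0 ≤ᵐ[μ] X) (hX0 : ¬ X =ᵐ[μ] 0) :
    ∀ l ∈ Ioi (0 : ℝ), 0 < deriv (cumulantFun X μ) l := fun l hl => by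
  rw [deriv_cumulantFun]
  have hmem := Iio_subset_interior_integrableExpSet hXm hX (mem_Iio.2 (neg_lt_zero.2 hl))
  exact deriv_cgf_pos hmem hX hX0

lemma strictAntiOn_deriv_cumulantFun (hXm : AEMeasurable X μ) (hX : 0 ≤ᵐ[μ] X)
    (hXc : ∀ c : ℝ, ¬ X =ᵐ[μ] fun _ => c) :
    StrictAntiOn (deriv (cumulantFun X μ)) (Ioi 0) := fun a ha b hb hab => by
  have hmem := Iio_subset_interior_integrableExpSet hXm hX
  rw [deriv_cumulantFun, deriv_cumulantFun]
  exact strictMonoOn_deriv_cgf hXc (hmem (mem_Iio.2 (neg_lt_zero.2 hb)))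
    (hmem (mem_Iio.2 (neg_lt_zero.2 ha)))
    (neg_lt_neg hab)

end Cumulant

/-- Let `μ` be a non-Dirac Borel probability measure on `[0,∞)` with cumulant
function `φ` (a strictly increasing bijection from `[0,∞)` onto `[0, l)`, `l = −log μ({0})`),
and let `Ψ` be the inverse of `φ` (so `Ψ` is defined on the image `φ([0,∞)) = [0, l)`).
Let `p > 0`. Then `(Ψ^p)' > 0` on `(0,l) = φ((0,∞))`; `Ψ^p` is convex on `(0,l)` iff
`λ ↦ λ^{1−p} φ'(λ)` is non-increasing on `(0,∞)`, and `Ψ^p` is concave on `(0,l)` iff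
`λ ↦ λ^{1−p} φ'(λ)` is non-decreasing on `(0,∞)`. In particular, if `p ≥ 1` then `Ψ^p` is
strictly convex on `(0,l)` and `(Ψ^p)'(0+) = p · lim_{λ→0+} λ^{p−1}/φ'(λ)` exists in `[0,∞)`. -/
theorem stmt_18 (μ : Measure ℝ) [IsProbabilityMeasure μ]
    (hsupp : μ {x | x < 0} = 0) (hnotdirac : ∀ c : ℝ, μ ≠ Measure.dirac c)
    (φ : ℝ → ℝ) (hφ : ∀ l : ℝ, φ l = -Real.log (∫ x, Real.exp (-l * x) ∂μ))
    (Ψ : ℝ → ℝ) (hΨ : Set.InvOn Ψ φ (Ici 0) (φ '' (Ici 0)))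
    (p : ℝ) (hp : 0 < p) :
    (∀ x ∈ φ '' (Ioi 0), 0 < deriv (fun y => Ψ y ^ p) x) ∧
    (ConvexOn ℝ (φ '' (Ioi 0)) (fun y => Ψ y ^ p) ↔
      AntitoneOn (fun l => l ^ (1 - p) * deriv φ l) (Ioi 0)) ∧
    (ConcaveOn ℝ (φ '' (Ioi 0)) (fun y => Ψ y ^ p) ↔
      MonotoneOn (fun l => l ^ (1 - p) * deriv φ l) (Ioi 0)) ∧
    (1 ≤ p →
      StrictConvexOn ℝ (φ '' (Ioi 0)) (fun y => Ψ y ^ p) ∧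
      ∃ L : ℝ, 0 ≤ L ∧
        Tendsto (deriv (fun y => Ψ y ^ p)) (nhdsWithin 0 (Ioi 0)) (nhds L) ∧
        Tendsto (fun l => p * (l ^ (p - 1) / deriv φ l)) (nhdsWithin 0 (Ioi 0)) (nhds L)) := by
  obtain rfl : φ = cumulantFun id μ := funext hφ
  have hm : AEMeasurable id μ := aemeasurable_id
  have hnonneg : 0 ≤ᵐ[μ] id := by simpa [EventuallyLE, ae_iff] using hsupp
  have hconst (c : ℝ) : ¬ id =ᵐ[μ] fun _ => c := fun h => hnotdirac c (eq_dirac_of_ae_eq h)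
  have hcont := continuousOn_cumulantFun hm hnonneg
  have hpos := deriv_cumulantFun_pos hm hnonneg (hconst 0)
  have hanti := strictAntiOn_deriv_cumulantFun hm hnonneg hconst
  have hinv : LeftInvOn Ψ (cumulantFun id μ) (Ioi 0) := hΨ.1.mono Ioi_subset_Ici_self
  have hopen : IsOpen (Ioi (0 : ℝ)) := isOpen_Ioi
  have hconv : Convex ℝ (Ioi (0 : ℝ)) := convex_Ioi 0
  refine ⟨deriv_leftInverse_rpow_pos hopen hconv subset_rfl hpos hinv hp,
    convexOn_leftInverse_rpow_iff hopen hconv subset_rfl hpos hinv hp,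
    concaveOn_leftInverse_rpow_iff hopen hconv subset_rfl hpos hinv hp, fun hp1 =>
      ⟨strictConvexOn_leftInverse_rpow hopen hconv subset_rfl hpos hanti hinv hp1, ?_⟩⟩
  simpa only [cumulantFun_zero] using
    exists_tendsto_deriv_leftInverse_rpow le_rfl hcont hpos hanti.antitoneOn hinv hp1
end

section
/- Let φ : [0,∞) → [0,∞) be a strictly increasing bijection, differentiable on (0,∞), with φ(0) = 0, and let Ψ be its inverse. Let μ be a Borel probability measure on (0,∞) such that ∫_{(0,∞)} e^{−λx} μ(dx) = e^{−φ(λ)} for all λ ≥ 0. Then for every p > −1 such that x ↦ e^{−x} Ψ(x)^p is integrable on (0,∞), one has ∫_{(0,∞)} x^{−p} μ(dx) = (1/Γ(p+1)) ∫₀^∞ e^{−x} Ψ(x)^p dx. -/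
/-!
For `x > 0`, the Gamma integral gives `Γ(p + 1) x^(-p) = ∫₀^∞ l^p · x e^(-lx) dl`. Integrating
against `μ` and exchanging the integrals leaves `∫ x e^(-lx) μ(dx)`, which is minus the derivative
of the Laplace transform `e^(-φ(l))`, that is, `φ'(l) e^(-φ(l))`. The substitution `u = φ(l)`
then turns `∫₀^∞ l^p φ'(l) e^(-φ(l)) dl` into `∫ e^(-u) Ψ(u)^p du`.
-/

open MeasureTheory Set Filter

section GammaKernel

variable {p : ℝ}

lemma integral_Ioi_rpow_mul_mul_exp_neg_mul {x : ℝ} (hp : -1 < p) (hx : 0 < x) :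
    ∫ l in Ioi (0 : ℝ), l ^ p * (x * Real.exp (-l * x)) = Real.Gamma (p + 1) * x ^ (-p) := by
  calc ∫ l in Ioi (0 : ℝ), l ^ p * (x * Real.exp (-l * x))
      = x * ∫ l in Ioi (0 : ℝ), l ^ (p + 1 - 1) * Real.exp (-(x * l)) := by
        rw [← integral_const_mul]
        congr with l
        ring_nf
    _ = x * ((1 / x) ^ (p + 1) * Real.Gamma (p + 1)) := by
        rw [Real.integral_rpow_mul_exp_neg_mul_Ioi (by linarith) hx]
    _ = Real.Gamma (p + 1) * x ^ (-p) := by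
        rw [one_div, Real.inv_rpow hx.le, Real.rpow_add_one hx.ne', Real.rpow_neg hx.le]
        field_simp

lemma lintegral_Ioi_rpow_mul_mul_exp_neg_mul {x : ℝ} (hp : -1 < p) (hx : 0 < x) :
    ∫⁻ l in Ioi (0 : ℝ), ENNReal.ofReal (l ^ p * (x * Real.exp (-l * x))) =
      ENNReal.ofReal (Real.Gamma (p + 1)) * ENNReal.ofReal (x ^ (-p)) := by
  have hΓ : 0 < Real.Gamma (p + 1) := Real.Gamma_pos_of_pos (by linarith)
  have hval := integral_Ioi_rpow_mul_mul_exp_neg_mul hp hx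
  have hint : IntegrableOn (fun l => l ^ p * (x * Real.exp (-l * x))) (Ioi 0) :=
    Integrable.of_integral_ne_zero (by rw [hval]; positivity)
  rw [← ENNReal.ofReal_mul hΓ.le, ← hval, ofReal_integral_eq_lintegral_ofReal hint]
  filter_upwards [ae_restrict_mem measurableSet_Ioi] with l (hl : 0 < l)
  positivity

lemma ofReal_Gamma_mul_lintegral_rpow_neg {μ : Measure ℝ} [SFinite μ] (hpos : ∀ᵐ x ∂μ, 0 < x)
    (hp : -1 < p) :
    ENNReal.ofReal (Real.Gamma (p + 1)) * ∫⁻ x, ENNReal.ofReal (x ^ (-p)) ∂μ =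
      ∫⁻ l in Ioi (0 : ℝ), ENNReal.ofReal (l ^ p) *
        ∫⁻ x, ENNReal.ofReal (x * Real.exp (-l * x)) ∂μ := by
  calc ENNReal.ofReal (Real.Gamma (p + 1)) * ∫⁻ x, ENNReal.ofReal (x ^ (-p)) ∂μ
      = ∫⁻ x, (∫⁻ l in Ioi (0 : ℝ), ENNReal.ofReal (l ^ p * (x * Real.exp (-l * x)))) ∂μ := by
        rw [← lintegral_const_mul _ (by fun_prop)]
        refine lintegral_congr_ae ?_
        filter_upwards [hpos] with x hx
        exact (lintegral_Ioi_rpow_mul_mul_exp_neg_mul hp hx).symm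
    _ = ∫⁻ l in Ioi (0 : ℝ), ∫⁻ x, ENNReal.ofReal (l ^ p * (x * Real.exp (-l * x))) ∂μ :=
        lintegral_lintegral_swap (by unfold Function.uncurry; fun_prop)
    _ = _ := by
        refine setLIntegral_congr_fun measurableSet_Ioi fun l (hl : 0 < l) => ?_
        simp_rw [ENNReal.ofReal_mul (Real.rpow_nonneg hl.le p)]
        exact lintegral_const_mul _ (by fun_prop)

end GammaKernel

section LaplaceTransform

variable {φ : ℝ → ℝ} {μ : Measure ℝ} {l : ℝ}

lemma neg_mem_interior_integrableExpSet_of_laplace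
    (hlaplace : ∀ᶠ t in nhds l, ∫ x, Real.exp (-t * x) ∂μ = Real.exp (-φ t)) :
    -l ∈ interior (ProbabilityTheory.integrableExpSet id μ) := by
  rw [mem_interior_iff_mem_nhds]
  have hneg : Tendsto Neg.neg (nhds (-l)) (nhds l) := by simpa using tendsto_neg (-l)
  filter_upwards [hneg.eventually hlaplace] with t ht
  rw [neg_neg] at ht
  exact Integrable.of_integral_ne_zero (ht ▸ (Real.exp_pos _).ne')

lemma integrable_mul_exp_neg_mul_of_laplace
    (hlaplace : ∀ᶠ t in nhds l, ∫ x, Real.exp (-t * x) ∂μ = Real.exp (-φ t)) :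
    Integrable (fun x => x * Real.exp (-l * x)) μ := by
  simpa using ProbabilityTheory.integrable_pow_mul_exp_of_mem_interior_integrableExpSet
    (neg_mem_interior_integrableExpSet_of_laplace hlaplace) 1

lemma hasDerivAt_of_laplace
    (hlaplace : ∀ᶠ t in nhds l, ∫ x, Real.exp (-t * x) ∂μ = Real.exp (-φ t)) :
    HasDerivAt φ (Real.exp (φ l) * ∫ x, x * Real.exp (-l * x) ∂μ) l := by
  have hmgf := (ProbabilityTheory.hasDerivAt_mgf
    (neg_mem_interior_integrableExpSet_of_laplace hlaplace)).comp l (hasDerivAt_neg l)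
  have hmgf_eq : ProbabilityTheory.mgf id μ ∘ Neg.neg =ᶠ[nhds l] fun t => Real.exp (-φ t) :=
    hlaplace
  have hlog := (hmgf.congr_of_eventuallyEq hmgf_eq.symm).log (Real.exp_pos _).ne'
  simp only [Real.log_exp, id] at hlog
  have hφ := hlog.fun_neg
  simp only [neg_neg] at hφ
  refine hφ.congr_deriv ?_
  rw [Real.exp_neg, div_inv_eq_mul]
  ring

variable {Ψ : ℝ → ℝ} {p : ℝ}

lemma lintegral_image_exp_neg_mul_rpow_of_laplace (hpos : ∀ᵐ x ∂μ, 0 < x)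
    (hlaplace : ∀ l : ℝ, 0 < l → ∫ x, Real.exp (-l * x) ∂μ = Real.exp (-φ l))
    (hinv : LeftInvOn Ψ φ (Ioi 0)) :
    ∫⁻ u in φ '' Ioi 0, ENNReal.ofReal (Real.exp (-u) * Ψ u ^ p) =
      ∫⁻ l in Ioi (0 : ℝ), ENNReal.ofReal (l ^ p) *
        ∫⁻ x, ENNReal.ofReal (x * Real.exp (-l * x)) ∂μ := by
  have hnear (l : ℝ) (hl : 0 < l) :
      ∀ᶠ t in nhds l, ∫ x, Real.exp (-t * x) ∂μ = Real.exp (-φ t) :=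
    (eventually_gt_nhds hl).mono hlaplace
  rw [lintegral_image_eq_lintegral_abs_deriv_mul measurableSet_Ioi
    (fun l hl => (hasDerivAt_of_laplace (hnear l hl)).hasDerivWithinAt) hinv.injOn]
  refine setLIntegral_congr_fun measurableSet_Ioi fun l (hl : 0 < l) => ?_
  have hnonneg : ∀ᵐ x ∂μ, 0 ≤ x * Real.exp (-l * x) := by
    filter_upwards [hpos] with x hx
    positivity
  rw [← ofReal_integral_eq_lintegral_ofReal
    (integrable_mul_exp_neg_mul_of_laplace (hnear l hl)) hnonneg, hinv hl]
  set I := ∫ x, x * Real.exp (-l * x) ∂μ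
  have hI : 0 ≤ I := integral_nonneg_of_ae hnonneg
  have hcancel : Real.exp (φ l) * I * (Real.exp (-φ l) * l ^ p) = l ^ p * I := by
    rw [Real.exp_neg]
    field_simp
  rw [abs_of_nonneg (by positivity), ← ENNReal.ofReal_mul (by positivity),
    ← ENNReal.ofReal_mul (by positivity), hcancel]

theorem stmt_19_general [SFinite μ] (hpos : ∀ᵐ x ∂μ, 0 < x)
    (hlaplace : ∀ l : ℝ, 0 < l → ∫ x, Real.exp (-l * x) ∂μ = Real.exp (-φ l))
    (hinv : LeftInvOn Ψ φ (Ioi 0)) (hp : -1 < p) :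
    ∫⁻ x, ENNReal.ofReal (x ^ (-p)) ∂μ = ENNReal.ofReal (1 / Real.Gamma (p + 1)) *
      ∫⁻ u in φ '' Ioi 0, ENNReal.ofReal (Real.exp (-u) * Ψ u ^ p) := by
  have hΓ : 0 < Real.Gamma (p + 1) := Real.Gamma_pos_of_pos (by linarith)
  rw [lintegral_image_exp_neg_mul_rpow_of_laplace hpos hlaplace hinv,
    ← ofReal_Gamma_mul_lintegral_rpow_neg hpos hp, ← mul_assoc,
    ← ENNReal.ofReal_mul (by positivity), one_div_mul_cancel hΓ.ne', ENNReal.ofReal_one, one_mul]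

end LaplaceTransform

lemma ofReal_integral_exp_neg_mul_rpow {Ψ : ℝ → ℝ} {p : ℝ} (hΨ : MapsTo Ψ (Ioi 0) (Ici 0))
    (hint : IntegrableOn (fun u => Real.exp (-u) * Ψ u ^ p) (Ioi 0)) :
    ENNReal.ofReal (∫ u in Ioi (0 : ℝ), Real.exp (-u) * Ψ u ^ p) =
      ∫⁻ u in Ioi (0 : ℝ), ENNReal.ofReal (Real.exp (-u) * Ψ u ^ p) := by
  refine ofReal_integral_eq_lintegral_ofReal hint ?_
  filter_upwards [ae_restrict_mem measurableSet_Ioi] with u hu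
  exact mul_nonneg (Real.exp_pos _).le (Real.rpow_nonneg (hΨ hu) p)

/-- Let `φ : [0,∞) → [0,∞)` be a strictly increasing bijection,
differentiable on `(0,∞)`, with `φ(0) = 0`, and let `Ψ` be its inverse. Let `μ` be a Borel
probability measure on `(0,∞)` with `∫ e^{−λx} μ(dx) = e^{−φ(λ)}` for all `λ ≥ 0`. Then for
every `p > −1` such that `x ↦ e^{−x} Ψ(x)^p` is integrable on `(0,∞)`, one has
`∫ x^{−p} μ(dx) = (1/Γ(p+1)) ∫₀^∞ e^{−x} Ψ(x)^p dx`. -/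
theorem stmt_19 (φ Ψ : ℝ → ℝ)
    (hmono : StrictMonoOn φ (Ici 0)) (hbij : Set.BijOn φ (Ici 0) (Ici 0))
    (hdiff : DifferentiableOn ℝ φ (Ioi 0)) (h0 : φ 0 = 0)
    (hinv : Set.InvOn Ψ φ (Ici 0) (Ici 0))
    (μ : Measure ℝ) [IsProbabilityMeasure μ] (hsupp : μ {x | x ≤ 0} = 0)
    (hlaplace : ∀ l : ℝ, 0 ≤ l → ∫ x, Real.exp (-l * x) ∂μ = Real.exp (-φ l))
    (p : ℝ) (hp : -1 < p)
    (hint : IntegrableOn (fun x => Real.exp (-x) * Ψ x ^ p) (Ioi 0)) :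
    ∫⁻ x, ENNReal.ofReal (x ^ (-p)) ∂μ =
      ENNReal.ofReal ((1 / Real.Gamma (p + 1)) * ∫ x in Ioi (0 : ℝ), Real.exp (-x) * Ψ x ^ p) := by
  have hpos : ∀ᵐ x ∂μ, 0 < x := by simpa only [ae_iff, not_lt] using hsupp
  have himage : φ '' Ioi 0 = Ioi 0 := by
    simpa only [Ici_sdiff_left, h0] using (hbij.sdiff_singleton self_mem_Ici).image_eq
  have hΨ : MapsTo Ψ (Ioi 0) (Ici 0) :=
    (hbij.symm hinv.symm).mapsTo.mono_left Ioi_subset_Ici_self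
  have hΓ : 0 ≤ 1 / Real.Gamma (p + 1) :=
    one_div_nonneg.2 (Real.Gamma_nonneg_of_nonneg (by linarith))
  rw [stmt_19_general hpos (fun l hl => hlaplace l hl.le) (hinv.1.mono Ioi_subset_Ici_self) hp,
    himage, ENNReal.ofReal_mul hΓ, ofReal_integral_exp_neg_mul_rpow hΨ hint]
end
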